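/- Let (Q,+) be a loop, let φ and ψ be automorphisms of (Q,+), let c be an element of Z(Q), and let (Q,*) be the affine quasigroup with x*y = (φ(x)+ψ(y))+c. Then (Q,*) is medial if and only if the operation + is commutative and associative (so that (Q,+) is an abelian group) and φ∘ψ = ψ∘φ. -/

import Mathlib

/-- A loop: a quasigroup with a two-sided neutral element. -/
structure Loop (Q : Type) where
  add : Q → Q → Q
  zero : Q
  addLeftBij : ∀ x, Function.Bijective fun y => add x y
  addRightBij : ∀ x, Function.Bijective fun y => add y x
  zero_add : ∀ x, add zero x = x
  add_zero : ∀ x, add x zero = x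

namespace Loop

/-- The center of a loop: elements commuting and associating with everything. -/
def center {Q : Type} (L : Loop Q) : Set Q :=
  {z | (∀ x, L.add z x = L.add x z) ∧
       (∀ x y, L.add z (L.add x y) = L.add (L.add z x) y) ∧
       (∀ x y, L.add x (L.add z y) = L.add (L.add x z) y) ∧
       (∀ x y, L.add x (L.add y z) = L.add (L.add x y) z)}

/-- A map `α` is central if `Z(Q) + α(x) = Z(Q) + x` for every `x`. -/
def IsCentral {Q : Type} (L : Loop Q) (α : Q → Q) : Prop :=
  ∀ x, (fun z => L.add z (α x)) '' L.center = (fun z => L.add z x) '' L.center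

/-- Automorphism of a loop: a bijective map respecting the operation. -/
def IsAut {Q : Type} (L : Loop Q) (f : Q → Q) : Prop :=
  Function.Bijective f ∧ ∀ x y, f (L.add x y) = L.add (f x) (f y)

/-- `neg` provides two-sided inverses for the loop. -/
def IsTwoSidedInv {Q : Type} (L : Loop Q) (neg : Q → Q) : Prop :=
  ∀ x, L.add x (neg x) = L.zero ∧ L.add (neg x) x = L.zero

/-- Commutative Moufang loop: commutative and satisfying the Moufang identity. -/
def IsCommMoufang {Q : Type} (L : Loop Q) : Prop :=
  (∀ x y, L.add x y = L.add y x) ∧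
  (∀ x y z, L.add x (L.add y (L.add x z)) = L.add (L.add (L.add x y) x) z)

end Loop

theorem Loop.center_map {Q : Type} (L : Loop Q) (f : Q → Q) (hf : L.IsAut f) (c : Q)
    (hc : c ∈ L.center) : f c ∈ L.center := by
  obtain ⟨⟨_, hs⟩, hm⟩ := hf
  obtain ⟨h1, h2, h3, h4⟩ := hc
  refine ⟨fun x => ?_, fun x y => ?_, fun x y => ?_, fun x y => ?_⟩
  · obtain ⟨x, rfl⟩ := hs x
    rw [← hm, ← hm, h1]
  all_goals
    obtain ⟨x, rfl⟩ := hs x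
    obtain ⟨y, rfl⟩ := hs y
    simp only [← hm]
  · rw [h2]
  · rw [h3]
  · rw [h4]

theorem Loop.pull {Q : Type} (L : Loop Q) (p q d g : Q)
    (hd : d ∈ L.center) (hg : g ∈ L.center) :
    L.add (L.add p d) (L.add q g) = L.add (L.add (L.add p q) g) d := by
  obtain ⟨d1, d2, d3, d4⟩ := hd
  obtain ⟨g1, g2, g3, g4⟩ := hg
  rw [← d3, d1, d4, g4]

open Loop in
/-- The affine quasigroup `x*y = (φ(x)+ψ(y))+c` is medial iff `(Q,+)` is an
abelian group and `φ∘ψ = ψ∘φ`. -/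
theorem stmt {Q : Type} (L : Loop Q) (φ ψ : Q → Q) (hφ : L.IsAut φ)
    (hψ : L.IsAut ψ) (c : Q) (hc : c ∈ L.center)
    (star : Q → Q → Q) (hstar : ∀ x y, star x y = L.add (L.add (φ x) (ψ y)) c) :
    (∀ x y u v, star (star x y) (star u v) = star (star x u) (star y v)) ↔
      ((∀ x y, L.add x y = L.add y x) ∧
       (∀ x y z, L.add (L.add x y) z = L.add x (L.add y z)) ∧
       φ ∘ ψ = ψ ∘ φ) := by
  have hφc := L.center_map φ hφ c hc
  have hψc := L.center_map ψ hψ c hc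
  have inj : ∀ z a b, L.add a z = L.add b z → a = b := fun z a b h => (L.addRightBij z).1 h
  have hz : ∀ f, L.IsAut f → f L.zero = L.zero := by
    intro f hf
    apply (L.addLeftBij (f L.zero)).1
    show L.add (f L.zero) (f L.zero) = L.add (f L.zero) L.zero
    rw [← hf.2, L.add_zero, L.add_zero]
  have hφ0 := hz φ hφ
  have hψ0 := hz ψ hψ
  have key : ∀ x y u v, star (star x y) (star u v) =
      L.add (L.add (L.add (L.add (L.add (φ (φ x)) (φ (ψ y)))
        (L.add (ψ (φ u)) (ψ (ψ v)))) (ψ c)) (φ c)) c := by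
    intro x y u v
    simp only [hstar, hφ.2, hψ.2]
    rw [L.pull _ _ _ _ hφc hψc]
  constructor
  · intro h
    have h' : ∀ x y u v, L.add (L.add (φ (φ x)) (φ (ψ y))) (L.add (ψ (φ u)) (ψ (ψ v))) =
        L.add (L.add (φ (φ x)) (φ (ψ u))) (L.add (ψ (φ y)) (ψ (ψ v))) := by
      intro x y u v
      have := h x y u v
      rw [key, key] at this
      exact inj _ _ _ (inj _ _ _ (inj _ _ _ this))
    have hcomm : ∀ y, φ (ψ y) = ψ (φ y) := by
      intro y
      simpa [hφ0, hψ0, L.zero_add, L.add_zero] using h' L.zero y L.zero L.zero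
    have sφ := hφ.1.2
    have sψ := hψ.1.2
    refine ⟨fun x y => ?_, fun x y z => ?_, funext hcomm⟩
    · obtain ⟨x, rfl⟩ := (sφ.comp sψ) x
      obtain ⟨y, rfl⟩ := (sφ.comp sψ) y
      simpa [hφ0, hψ0, L.zero_add, L.add_zero, ← hcomm] using h' L.zero x y L.zero
    · obtain ⟨x, rfl⟩ := (sφ.comp sφ) x
      obtain ⟨y, rfl⟩ := (sφ.comp sψ) y
      obtain ⟨z, rfl⟩ := (sψ.comp sψ) z
      simpa [hφ0, hψ0, L.zero_add, L.add_zero, ← hcomm] using h' x y L.zero z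
  · rintro ⟨hc, ha, hcm⟩ x y u v
    have hcm' : ∀ y, φ (ψ y) = ψ (φ y) := fun y => congrFun hcm y
    rw [key, key]
    have : ∀ a b e f, L.add (L.add a b) (L.add e f) = L.add (L.add a e) (L.add b f) := by
      intro a b e f
      rw [ha, ha, ← ha b, hc b e, ha]
    rw [this, hcm', hcm']
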